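/- Let ω be a weight function such that φ(t) = ω(e^t) is convex. Let τ > 1, L ≥ 1 and C₀ ≥ 1 be such that ω(τ t) ≤ L ω(t) + log C₀ for all t ≥ 0. Then for every r > 0 and every n ∈ ℕ: τ^n e^{(L/r) φ*(r n / L)} ≤ C₀^{1/r} e^{(1/r) φ*(r n)}. -/

import Mathlib

open MeasureTheory Filter

noncomputable section

/-- The Young conjugate `φ*(v) = sup_{u ≥ 0} (u v − φ(u))`, valued in `EReal`. -/
def youngConj (φ : ℝ → ℝ) (v : ℝ) : EReal :=
  ⨆ u : Set.Ici (0 : ℝ), (((u : ℝ) * v - φ u : ℝ) : EReal)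

/-!
Put `φ(t) = ω(eᵗ)` and `a = log τ ≥ 0`. The growth condition on `ω` reads
`φ(u + a) ≤ L φ(u) + log C₀`, a bound of a translate of `φ / r` by `(L / r) φ` plus a constant.
Translating by `a ≥ 0` keeps the half line `[0, ∞)` inside itself and contributes `a s` to the
conjugate at `s`, which gives `s log τ + (L φ / r)*(s) ≤ (log C₀) / r + (φ / r)*(s)`. Since
`(K φ)*(s) = K φ*(s / K)`, exponentiating is all that remains.
-/

theorem le_youngConj (φ : ℝ → ℝ) (v : ℝ) {u : ℝ} (hu : 0 ≤ u) :
    ((u * v - φ u : ℝ) : EReal) ≤ youngConj φ v :=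
  le_iSup (fun u : Set.Ici (0 : ℝ) => (((u : ℝ) * v - φ u : ℝ) : EReal)) ⟨u, hu⟩

theorem youngConj_le_iff {φ : ℝ → ℝ} {v : ℝ} {y : EReal} :
    youngConj φ v ≤ y ↔ ∀ u : ℝ, 0 ≤ u → ((u * v - φ u : ℝ) : EReal) ≤ y :=
  iSup_le_iff.trans Subtype.forall

theorem youngConj_const_mul {K : ℝ} (hK : 0 < K) (φ : ℝ → ℝ) (v : ℝ) :
    youngConj (fun u => K * φ u) v = K * youngConj φ (v / K) := by
  have hK_pos : (0 : EReal) < K := EReal.coe_pos.2 hK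
  have scale (u : ℝ) : K * (u * (v / K) - φ u) = u * v - K * φ u := by field_simp
  apply le_antisymm
  · refine youngConj_le_iff.2 fun u hu => ?_
    rw [← scale, EReal.coe_mul]
    exact mul_le_mul_of_nonneg_left (le_youngConj φ (v / K) hu) hK_pos.le
  · rw [mul_comm, ← EReal.le_div_iff_mul_le hK_pos (EReal.coe_ne_top K), youngConj_le_iff]
    intro u hu
    rw [EReal.le_div_iff_mul_le hK_pos (EReal.coe_ne_top K), ← EReal.coe_mul, mul_comm, scale]
    exact le_youngConj (fun u => K * φ u) v hu

theorem add_youngConj_le_add_youngConj_of_translate_le {φ ψ : ℝ → ℝ} {a c : ℝ} (ha : 0 ≤ a)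
    (h : ∀ u, 0 ≤ u → ψ (u + a) ≤ φ u + c) (v : ℝ) :
    ((a * v : ℝ) : EReal) + youngConj φ v ≤ (c : EReal) + youngConj ψ v := by
  rw [add_comm]
  refine EReal.add_le_of_le_sub (youngConj_le_iff.2 fun u hu => ?_)
  rw [EReal.le_sub_iff_add_le (.inl (EReal.coe_ne_bot _)) (.inl (EReal.coe_ne_top _))]
  calc ((u * v - φ u : ℝ) : EReal) + ((a * v : ℝ) : EReal)
      ≤ (c : EReal) + (((u + a) * v - ψ (u + a) : ℝ) : EReal) := by
        norm_cast
        linarith [h u hu]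
    _ ≤ (c : EReal) + youngConj ψ v := by
        gcongr
        exact le_youngConj ψ v (add_nonneg hu ha)

theorem ereal_exp_log_mul {x : ℝ} (hx : 0 < x) (s : ℝ) :
    EReal.exp ((Real.log x * s : ℝ) : EReal) = ENNReal.ofReal (x ^ s) := by
  rw [EReal.exp_coe, Real.rpow_def_of_pos hx]

theorem stmt5_general (ω : ℝ → ℝ) {τ L C₀ : ℝ} (hτ : 1 ≤ τ) (hL : 0 < L) (hC₀ : 0 < C₀)
    (hmod : ∀ t : ℝ, 1 ≤ t → ω (τ * t) ≤ L * ω t + Real.log C₀) {r : ℝ} (hr : 0 < r) (s : ℝ) :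
    ENNReal.ofReal τ ^ s *
        EReal.exp (((L / r : ℝ) : EReal) *
          youngConj (fun t => ω (Real.exp t)) (r * s / L))
      ≤ ENNReal.ofReal (C₀ ^ (1 / r)) *
        EReal.exp (((1 / r : ℝ) : EReal) *
          youngConj (fun t => ω (Real.exp t)) (r * s)) := by
  have hτ_pos : 0 < τ := one_pos.trans_le hτ
  have translate_le (u : ℝ) (hu : 0 ≤ u) : 1 / r * ω (Real.exp (u + Real.log τ)) ≤
      L / r * ω (Real.exp u) + Real.log C₀ * (1 / r) := by
    rw [Real.exp_add, Real.exp_log hτ_pos, mul_comm (Real.exp u)]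
    calc 1 / r * ω (τ * Real.exp u)
        ≤ 1 / r * (L * ω (Real.exp u) + Real.log C₀) := by
          gcongr
          exact hmod _ (Real.one_le_exp hu)
      _ = L / r * ω (Real.exp u) + Real.log C₀ * (1 / r) := by ring
  have conj_le := add_youngConj_le_add_youngConj_of_translate_le
    (φ := fun t => L / r * ω (Real.exp t)) (ψ := fun t => 1 / r * ω (Real.exp t))
    (Real.log_nonneg hτ) translate_le s
  rw [youngConj_const_mul (div_pos hL hr) (fun t => ω (Real.exp t)),
    youngConj_const_mul (one_div_pos.2 hr) (fun t => ω (Real.exp t)),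
    show s / (L / r) = r * s / L by field_simp, show s / (1 / r) = r * s by field_simp] at conj_le
  simpa only [EReal.exp_add, ereal_exp_log_mul hτ_pos, ereal_exp_log_mul hC₀,
    ENNReal.ofReal_rpow_of_pos hτ_pos] using EReal.exp_monotone conj_le

theorem stmt5 (ω : ℝ → ℝ)
    (hω_nonneg : ∀ t : ℝ, 0 ≤ t → 0 ≤ ω t)
    (hω_mono : MonotoneOn ω (Set.Ici (0 : ℝ)))
    (hω_unbdd : ∀ M : ℝ, ∃ t : ℝ, 0 ≤ t ∧ M < ω t)
    (hφ : ConvexOn ℝ Set.univ (fun t : ℝ => ω (Real.exp t)))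
    (τ L C₀ : ℝ) (hτ : 1 < τ) (hL : 1 ≤ L) (hC₀ : 1 ≤ C₀)
    (hmod : ∀ t : ℝ, 0 ≤ t → ω (τ * t) ≤ L * ω t + Real.log C₀) :
    ∀ r : ℝ, 0 < r → ∀ n : ℕ,
      ENNReal.ofReal τ ^ n *
          EReal.exp (((L / r : ℝ) : EReal) *
            youngConj (fun t => ω (Real.exp t)) (r * n / L))
        ≤ ENNReal.ofReal (C₀ ^ (1 / r)) *
          EReal.exp (((1 / r : ℝ) : EReal) *
            youngConj (fun t => ω (Real.exp t)) (r * n)) := by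
  intro r hr n
  simpa only [ENNReal.rpow_natCast] using stmt5_general ω hτ.le (one_pos.trans_le hL)
    (one_pos.trans_le hC₀) (fun t ht => hmod t (zero_le_one.trans ht)) hr n

end
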